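/- Let u₀ ∈ L¹(ℝ) with M = ∫_ℝ u₀(x) dx. Define w₀(x) = exp(∫_{−∞}^x u₀(z) dz), w(·,t) = G(·,t) * w₀ where G is the one‑dimensional heat kernel, and u(x,t) = w_x(x,t)/w(x,t) (the Hopf–Cole solution of the Burgers equation u_t − u_{xx} = (u²)_x with u(·,0) = u₀). Let h(x) = (4π)^{−1/2} exp(−x²/4), f_M(x) = (e^M − 1)h(x) / ((e^M − 1)∫_{−∞}^x h(s) ds + 1), and u_M(x,t) = t^{−1/2} f_M(x/√t). Then for every p ∈ [1,∞], t^{(1/2)(1−1/p)} ‖u(·,t) − u_M(·,t)‖_p → 0 as t → ∞. -/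

import Mathlib

open MeasureTheory Real Filter Topology
open scoped ENNReal

noncomputable section

/-- The one-dimensional heat kernel `G(x,t) = (4πt)^{-1/2} exp(-x²/(4t))`. -/
def G1 (x t : ℝ) : ℝ := (4 * π * t) ^ (-(1 : ℝ) / 2) * Real.exp (-x ^ 2 / (4 * t))

/-- The Gaussian profile `h(x) = (4π)^{-1/2} exp(-x²/4)`. -/
def gauss (x : ℝ) : ℝ := (4 * π) ^ (-(1 : ℝ) / 2) * Real.exp (-x ^ 2 / 4)

/-- The self-similar profile of mass `M` of the viscous Burgers equation. -/
def fM (M x : ℝ) : ℝ :=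
  (Real.exp M - 1) * gauss x / ((Real.exp M - 1) * (∫ s in Set.Iic x, gauss s) + 1)

/-- The self-similar solution of mass `M` of the viscous Burgers equation. -/
def uM (M x t : ℝ) : ℝ := t ^ (-(1 : ℝ) / 2) * fM M (x / Real.sqrt t)

/-!
The Hopf–Cole datum `w₀ = exp (∫_{-∞}^x u₀)` is bounded and absolutely continuous, and its almost
everywhere derivative `v = u₀ w₀` is integrable with total mass `exp M - 1`. Hence, `H` denoting
the primitive of `gauss` vanishing at `-∞`, the variables `s = √t`, `ξ = x / √t` give
`w = 1 + ∫ H (ξ - z / s) v z dz` and `s w_x = ∫ gauss (ξ - z / s) v z dz`. As `s → ∞` the density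
`z ↦ s v (s z)` concentrates at the origin, so the two integrals converge to
`(exp M - 1) H` uniformly and to `(exp M - 1) gauss` in every `L^p`: in `L^∞` by uniform
continuity, in `L¹` by continuity of translations, and in between by interpolation. The limit
denominator is at least `min 1 (exp M) > 0`, so the quotients converge to `f_M` in `L^p`, and the
weight `t ^ ((1 - 1 / p) / 2)` is exactly what makes the `L^p` norm invariant under the rescaling.
-/

section LpNorm

variable {α E : Type*} [MeasurableSpace α] {μ : Measure α} [NormedAddCommGroup E]

lemma lintegral_enorm_rpow_le_max_rpow (f : α → E) {q : ℝ} (hq : 1 ≤ q) :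
    ∫⁻ x, ‖f x‖ₑ ^ q ∂μ ≤ max (eLpNorm f 1 μ) (eLpNorm f ∞ μ) ^ q := by
  set B := max (eLpNorm f 1 μ) (eLpNorm f ∞ μ)
  by_cases hB_top : B = ∞
  · rw [hB_top, ENNReal.top_rpow_of_pos (by linarith)]
    exact le_top
  have rpow_split (a : ℝ≥0∞) : a ^ q = a ^ (q - 1) * a := by
    conv_rhs => rw [← ENNReal.rpow_one a, ← ENNReal.rpow_mul, one_mul,
      ← ENNReal.rpow_add_of_nonneg _ _ (by linarith) zero_le_one, sub_add_cancel]
  have enorm_le : ∀ᵐ x ∂μ, ‖f x‖ₑ ≤ B := by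
    filter_upwards [ae_le_eLpNormEssSup (f := f) (μ := μ)] with x hx
    exact hx.trans (eLpNorm_exponent_top.symm.le.trans (le_max_right _ _))
  calc ∫⁻ x, ‖f x‖ₑ ^ q ∂μ ≤ ∫⁻ x, B ^ (q - 1) * ‖f x‖ₑ ∂μ := by
        refine lintegral_mono_ae ?_
        filter_upwards [enorm_le] with x hx
        rw [rpow_split]
        gcongr
    _ = B ^ (q - 1) * eLpNorm f 1 μ := by
        rw [lintegral_const_mul' _ _ (ENNReal.rpow_ne_top_of_nonneg (by linarith) hB_top),
          eLpNorm_one_eq_lintegral_enorm]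
    _ ≤ B ^ q := by
        rw [rpow_split]
        gcongr
        exact le_max_left _ _

lemma eLpNorm_le_max_eLpNorm_one_top (f : α → E) {p : ℝ≥0∞} (hp : 1 ≤ p) :
    eLpNorm f p μ ≤ max (eLpNorm f 1 μ) (eLpNorm f ∞ μ) := by
  obtain rfl | hp_top := eq_or_ne p ∞
  · exact le_max_right _ _
  have hq : 1 ≤ p.toReal := by simpa using ENNReal.toReal_mono hp_top hp
  rw [eLpNorm_eq_lintegral_rpow_enorm_toReal (zero_lt_one.trans_le hp).ne' hp_top, one_div,
    ENNReal.rpow_inv_le_iff (by linarith)]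
  exact lintegral_enorm_rpow_le_max_rpow f hq

lemma tendsto_eLpNorm_top_sub_of_tendstoUniformly (μ : Measure α) {ι : Type*} {l : Filter ι}
    {F : ι → α → E} {f : α → E} (h : TendstoUniformly F f l) :
    Tendsto (fun i => eLpNorm (F i - f) ∞ μ) l (𝓝 0) := by
  refine ENNReal.tendsto_nhds_zero.2 fun ε hε => ?_
  obtain rfl | hε_top := eq_or_ne ε ∞
  · exact .of_forall fun _ => le_top
  filter_upwards [Metric.tendstoUniformly_iff.1 h ε.toReal (ENNReal.toReal_pos hε.ne' hε_top)]
    with i hi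
  rw [eLpNorm_exponent_top, ← ENNReal.ofReal_toReal hε_top]
  refine eLpNormEssSup_le_of_ae_bound (.of_forall fun x => ?_)
  rw [Pi.sub_apply, ← dist_eq_norm, dist_comm]
  exact (hi x).le

lemma eLpNorm_one_integral_le {β : Type*} [MeasurableSpace β] {ν : Measure β} [SFinite μ]
    [SFinite ν] [NormedSpace ℝ E] {K : α → β → E}
    (hK : AEStronglyMeasurable (Function.uncurry K) (μ.prod ν)) :
    eLpNorm (fun x => ∫ y, K x y ∂ν) 1 μ ≤ ∫⁻ y, eLpNorm (fun x => K x y) 1 μ ∂ν := by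
  simp only [eLpNorm_one_eq_lintegral_enorm]
  calc ∫⁻ x, ‖∫ y, K x y ∂ν‖ₑ ∂μ ≤ ∫⁻ x, ∫⁻ y, ‖K x y‖ₑ ∂ν ∂μ :=
        lintegral_mono fun x => enorm_integral_le_lintegral_enorm _
    _ = ∫⁻ y, ∫⁻ x, ‖K x y‖ₑ ∂μ ∂ν := lintegral_lintegral_swap hK.enorm

lemma abs_div_sub_div_le {a b V W v w : ℝ} (ha : 0 < a) (hb : 0 < b) (hW : a ≤ W) (hw : b ≤ w) :
    |V / W - v / w| ≤ a⁻¹ * (|V - v| + |W - w| * |b⁻¹ * v|) := by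
  have hW0 : 0 < W := ha.trans_le hW
  have hw0 : 0 < w := hb.trans_le hw
  have decomp : V / W - v / w = W⁻¹ * (V - v - (W - w) * (w⁻¹ * v)) := by
    field_simp
    ring
  calc |V / W - v / w| = W⁻¹ * |V - v - (W - w) * (w⁻¹ * v)| := by
        rw [decomp, abs_mul, abs_of_pos (inv_pos.2 hW0)]
    _ ≤ W⁻¹ * (|V - v| + |W - w| * (w⁻¹ * |v|)) := by
        gcongr
        refine (abs_sub _ _).trans_eq ?_
        rw [abs_mul, abs_mul, abs_of_pos (inv_pos.2 hw0)]
    _ ≤ a⁻¹ * (|V - v| + |W - w| * (b⁻¹ * |v|)) := by gcongr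
    _ = a⁻¹ * (|V - v| + |W - w| * |b⁻¹ * v|) := by
        rw [abs_mul b⁻¹, abs_of_pos (inv_pos.2 hb)]

lemma eLpNorm_div_sub_div_le {V W v w : α → ℝ} {p : ℝ≥0∞} {a b : ℝ} (hp : 1 ≤ p) (ha : 0 < a)
    (hb : 0 < b) (hVm : AEStronglyMeasurable V μ) (hWm : AEStronglyMeasurable W μ)
    (hvm : AEStronglyMeasurable v μ) (hwm : AEStronglyMeasurable w μ)
    (hW : ∀ x, a ≤ W x) (hw : ∀ x, b ≤ w x) :
    eLpNorm (fun x => V x / W x - v x / w x) p μ ≤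
      ‖a⁻¹‖ₑ * (eLpNorm (V - v) p μ + eLpNorm (W - w) ∞ μ * eLpNorm (b⁻¹ • v) p μ) := by
  have pointwise (x : α) : ‖V x / W x - v x / w x‖ ≤
      a⁻¹ * (‖(V - v) x‖ + ‖((W - w) • (b⁻¹ • v)) x‖) := by
    simpa only [Pi.smul_apply', Pi.smul_apply, Pi.sub_apply, smul_eq_mul, Real.norm_eq_abs,
      abs_mul (W x - w x)] using abs_div_sub_div_le ha hb (hW x) (hw x)
  calc eLpNorm (fun x => V x / W x - v x / w x) p μ
      ≤ eLpNorm (a⁻¹ • fun x => ‖(V - v) x‖ + ‖((W - w) • (b⁻¹ • v)) x‖) p μ :=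
        eLpNorm_mono_real pointwise
    _ ≤ ‖a⁻¹‖ₑ * (eLpNorm (V - v) p μ + eLpNorm ((W - w) • (b⁻¹ • v)) p μ) := by
        rw [eLpNorm_const_smul]
        gcongr
        refine (eLpNorm_add_le (hVm.sub hvm).norm
          ((hWm.sub hwm).smul (hvm.const_smul _)).norm hp).trans_eq ?_
        rw [eLpNorm_norm, eLpNorm_norm]
    _ ≤ _ := by
        gcongr
        exact eLpNorm_smul_le_eLpNorm_top_mul_eLpNorm p (hvm.const_smul _) _

lemma tendsto_eLpNorm_div_sub_div {ι : Type*} {l : Filter ι} {V W : ι → α → ℝ} {v w : α → ℝ}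
    {p : ℝ≥0∞} {c : ℝ} (hp : 1 ≤ p) (hc : 0 < c) (hV : ∀ i, AEStronglyMeasurable (V i) μ)
    (hW : ∀ i, AEStronglyMeasurable (W i) μ) (hv : MemLp v p μ)
    (hwm : AEStronglyMeasurable w μ) (hw : ∀ x, c ≤ w x)
    (hVv : Tendsto (fun i => eLpNorm (V i - v) p μ) l (𝓝 0)) (hWw : TendstoUniformly W w l) :
    Tendsto (fun i => eLpNorm (fun x => V i x / W i x - v x / w x) p μ) l (𝓝 0) := by
  have bound_tendsto : Tendsto (fun i => ‖(c / 2)⁻¹‖ₑ * (eLpNorm (V i - v) p μ +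
      eLpNorm (W i - w) ∞ μ * eLpNorm (c⁻¹ • v) p μ)) l (𝓝 0) := by
    have hWv := ENNReal.Tendsto.mul_const (tendsto_eLpNorm_top_sub_of_tendstoUniformly μ hWw)
      (.inr (hv.const_smul c⁻¹).eLpNorm_ne_top)
    simpa only [zero_mul, add_zero, mul_zero] using
      ENNReal.Tendsto.const_mul (hVv.add hWv) (.inr enorm_ne_top)
  refine tendsto_of_tendsto_of_tendsto_of_le_of_le' tendsto_const_nhds bound_tendsto
    (.of_forall fun _ => zero_le) ?_
  filter_upwards [Metric.tendstoUniformly_iff.1 hWw (c / 2) (half_pos hc)] with i hi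
  refine eLpNorm_div_sub_div_le hp (half_pos hc) hc (hV i) (hW i) hv.1 hwm (fun x => ?_) hw
  linarith [hw x, (abs_lt.1 (Real.dist_eq _ _ ▸ hi x)).2]

end LpNorm

section Dilation

variable {E : Type*} [NormedAddCommGroup E]

lemma eLpNorm_comp_div (f : ℝ → E) (p : ℝ≥0∞) {s : ℝ} (hs : s ≠ 0) :
    eLpNorm (fun x => f (x / s)) p volume =
      ENNReal.ofReal |s| ^ (1 / p).toReal * eLpNorm f p volume := by
  have hemb : MeasurableEmbedding (s⁻¹ * · : ℝ → ℝ) :=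
    (Homeomorph.mulLeft₀ s⁻¹ (inv_ne_zero hs)).measurableEmbedding
  have hmap : Measure.map (s⁻¹ * ·) volume = ENNReal.ofReal |s| • (volume : Measure ℝ) := by
    rw [Real.map_volume_mul_left (inv_ne_zero hs), inv_inv]
  rw [← smul_eq_mul, ← eLpNorm_smul_measure_of_ne_zero (by simpa using hs), ← hmap,
    hemb.eLpNorm_map_measure]
  simp only [Function.comp_def, div_eq_inv_mul]

lemma rpow_mul_eLpNorm_inv_sqrt_mul_comp_div_sqrt (F : ℝ → ℝ) {p : ℝ≥0∞} {t : ℝ}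
    (ht : 0 < t) :
    ENNReal.ofReal (t ^ ((1 / 2 : ℝ) * (1 - 1 / p.toReal))) *
      eLpNorm (fun x => (√t)⁻¹ * F (x / √t)) p volume = eLpNorm F p volume := by
  have hs : 0 < √t := Real.sqrt_pos.2 ht
  have exponents_cancel :
      t ^ ((1 / 2 : ℝ) * (1 - 1 / p.toReal)) * ((√t)⁻¹ * √t ^ (1 / p).toReal) = 1 := by
    rw [Real.sqrt_eq_rpow, ← Real.rpow_neg ht.le, ← Real.rpow_mul ht.le, ← Real.rpow_add ht,
      ← Real.rpow_add ht, ENNReal.toReal_div, ENNReal.toReal_one]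
    ring_nf
    simp
  have heq : (fun x => (√t)⁻¹ * F (x / √t)) = (√t)⁻¹ • fun x => F (x / √t) := rfl
  rw [heq, eLpNorm_const_smul, eLpNorm_comp_div F p hs.ne', abs_of_pos hs,
    Real.enorm_of_nonneg (inv_pos.2 hs).le, ENNReal.ofReal_rpow_of_pos hs, ← mul_assoc,
    ← mul_assoc, mul_assoc (ENNReal.ofReal _), ← ENNReal.ofReal_mul (by positivity),
    ← ENNReal.ofReal_mul (by positivity), exponents_cancel, ENNReal.ofReal_one, one_mul]

end Dilation

section Translation

lemma eLpNorm_comp_sub_sub_le {G E : Type*} [AddGroup G] [MeasurableSpace G] [MeasurableAdd G]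
    {μ : Measure G} [μ.IsAddRightInvariant] [NormedAddCommGroup E] {f : G → E} {p : ℝ≥0∞}
    (hp : 1 ≤ p) (hf : AEStronglyMeasurable f μ) (a : G) :
    eLpNorm (fun x => f (x - a) - f x) p μ ≤ 2 * eLpNorm f p μ := by
  have shift := measurePreserving_sub_right μ a
  refine (eLpNorm_sub_le (hf.comp_measurePreserving shift) hf hp).trans_eq ?_
  rw [eLpNorm_comp_measurePreserving hf shift, two_mul]

lemma tendsto_eLpNorm_comp_sub_sub {G E : Type*} [AddCommGroup G] [TopologicalSpace G]
    [IsTopologicalAddGroup G] [MeasurableSpace G] [BorelSpace G] {μ : Measure G}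
    [IsLocallyFiniteMeasure μ] [μ.InnerRegularCompactLTTop] [μ.IsAddLeftInvariant]
    [NormedAddCommGroup E] {f : G → E} {p : ℝ≥0∞} (hp : 1 ≤ p) (hp_top : p ≠ ∞)
    (hf : MemLp f p μ) :
    Tendsto (fun a => eLpNorm (fun x => f (x - a) - f x) p μ) (𝓝 0) (𝓝 0) := by
  have : Fact (1 ≤ p) := ⟨hp⟩
  have : Fact (p ≠ ∞) := ⟨hp_top⟩
  have orbit_continuous : Continuous fun a : G => DomAddAct.mk (-a) +ᵥ hf.toLp f :=
    (DomAddAct.continuous_mk.comp continuous_neg).vadd continuous_const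
  have edist_eq (a : G) : edist (DomAddAct.mk (-a) +ᵥ hf.toLp f) (hf.toLp f) =
      eLpNorm (fun x => f (x - a) - f x) p μ := by
    rw [DomAddAct.mk_vadd_toLp, Lp.edist_toLp_toLp]
    congr 1
    ext x
    simp [sub_eq_neg_add]
  have edist_tendsto := (orbit_continuous.edist (continuous_const (y := hf.toLp f))).tendsto 0
  simp only [edist_eq, sub_zero, sub_self, eLpNorm_zero'] at edist_tendsto
  exact edist_tendsto

end Translation

/-- The convolution of `φ` with the dilate `z ↦ s v(sz)` of a density `v`, written after the
substitution `z ↦ z / s`; as `s → ∞` the dilates concentrate at the origin. -/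
def dilatedConv (φ v : ℝ → ℝ) (s ξ : ℝ) : ℝ := ∫ z, φ (ξ - z / s) * v z

namespace dilatedConv

variable {φ v : ℝ → ℝ} {B : ℝ}

lemma integrable_integrand (hφ : Measurable φ) (hB : ∀ x, |φ x| ≤ B) (hv : Integrable v)
    (s ξ : ℝ) : Integrable fun z => φ (ξ - z / s) * v z :=
  hv.bdd_mul (hφ.comp (by fun_prop)).aestronglyMeasurable (.of_forall fun _ => hB _)

lemma sub_integral_mul (hφ : Measurable φ) (hB : ∀ x, |φ x| ≤ B) (hv : Integrable v) (s ξ : ℝ) :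
    dilatedConv φ v s ξ - (∫ z, v z) * φ ξ = ∫ z, (φ (ξ - z / s) - φ ξ) * v z := by
  rw [dilatedConv, mul_comm, ← integral_const_mul,
    ← integral_sub (integrable_integrand hφ hB hv s ξ) (hv.const_mul _)]
  simp only [sub_mul]

lemma continuous (hφ : Continuous φ) (hB : ∀ x, |φ x| ≤ B) (hv : Integrable v) (s : ℝ) :
    Continuous (dilatedConv φ v s) := by
  refine continuous_of_dominated (bound := fun z => B * |v z|)
    (fun ξ => (integrable_integrand hφ.measurable hB hv s ξ).aestronglyMeasurable)
    (fun ξ => .of_forall fun z => ?_) (hv.abs.const_mul B) (.of_forall fun z => by fun_prop)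
  rw [norm_mul]
  exact mul_le_mul_of_nonneg_right (hB _) (norm_nonneg _)

lemma hasDerivAt {φ' : ℝ → ℝ} {B' : ℝ} (hφ : ∀ x, HasDerivAt φ (φ' x) x) (hB : ∀ x, |φ x| ≤ B)
    (hB' : ∀ x, |φ' x| ≤ B') (hv : Integrable v) (s ξ : ℝ) :
    HasDerivAt (dilatedConv φ v s) (dilatedConv φ' v s ξ) ξ := by
  have hφ_meas : Measurable φ :=
    (continuous_iff_continuousAt.2 fun x => (hφ x).continuousAt).measurable
  have hφ'_meas : Measurable φ' := (funext fun x => (hφ x).deriv) ▸ measurable_deriv φ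
  refine (hasDerivAt_integral_of_dominated_loc_of_deriv_le
    (F := fun ξ z => φ (ξ - z / s) * v z) (F' := fun ξ z => φ' (ξ - z / s) * v z)
    (bound := fun z => B' * |v z|) univ_mem
    (.of_forall fun x => (integrable_integrand hφ_meas hB hv s x).aestronglyMeasurable)
    (integrable_integrand hφ_meas hB hv s ξ)
    (integrable_integrand hφ'_meas hB' hv s ξ).aestronglyMeasurable
    (.of_forall fun z x _ => ?_) (hv.abs.const_mul B') (.of_forall fun z x _ => ?_)).2
  · rw [norm_mul]
    exact mul_le_mul_of_nonneg_right (hB' _) (norm_nonneg _)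
  · exact ((hφ _).comp_sub_const x (z / s)).mul_const (v z)

lemma tendstoUniformly (hφ : UniformContinuous φ) (hB : ∀ x, |φ x| ≤ B) (hv : Integrable v) :
    TendstoUniformly (dilatedConv φ v) (fun ξ => (∫ z, v z) * φ ξ) atTop := by
  rw [tendstoUniformly_iff_tendsto, tendsto_uniformity_iff_dist_tendsto_zero]
  have difference_tendsto : Tendsto (fun q : ℝ × ℝ => ∫ z, (φ (q.2 - z / q.1) - φ q.2) * v z)
      (atTop ×ˢ ⊤) (𝓝 (∫ _ : ℝ, (0 : ℝ))) := by
    refine tendsto_integral_filter_of_dominated_convergence (fun z => 2 * B * |v z|)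
      (.of_forall fun q => ?_) (.of_forall fun q => .of_forall fun z => ?_)
      (hv.abs.const_mul _) (.of_forall fun z => ?_)
    · exact ((hφ.continuous.comp (by fun_prop)).sub continuous_const).aestronglyMeasurable.mul hv.1
    · rw [norm_mul]
      refine mul_le_mul_of_nonneg_right ((norm_sub_le _ _).trans ?_) (norm_nonneg _)
      simp only [Real.norm_eq_abs]
      linarith [hB (q.2 - z / q.1), hB q.2]
    · have shift_tendsto : Tendsto (fun q : ℝ × ℝ => (q.2 - z / q.1, q.2)) (atTop ×ˢ ⊤)
          (uniformity ℝ) := by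
        have hz : Tendsto (fun q : ℝ × ℝ => z / q.1) (atTop ×ˢ ⊤) (𝓝 0) :=
          tendsto_const_nhds.div_atTop tendsto_fst
        simpa [tendsto_uniformity_iff_dist_tendsto_zero, Real.dist_eq, abs_div] using hz.abs
      have increment_tendsto : Tendsto (fun q : ℝ × ℝ => φ (q.2 - z / q.1) - φ q.2) (atTop ×ˢ ⊤)
          (𝓝 0) :=
        tendsto_zero_iff_norm_tendsto_zero.2
          (tendsto_uniformity_iff_dist_tendsto_zero.1 (Tendsto.comp hφ shift_tendsto))
      simpa only [zero_mul] using increment_tendsto.mul_const (v z)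
  rw [integral_zero] at difference_tendsto
  simpa only [dist_comm, Real.dist_eq, sub_integral_mul hφ.continuous.measurable hB hv, abs_zero]
    using difference_tendsto.abs

lemma measurable_eLpNorm_one_comp_sub_sub (hφ : Measurable φ) :
    Measurable fun a => eLpNorm (fun ξ => φ (ξ - a) - φ ξ) 1 volume := by
  simp only [eLpNorm_one_eq_lintegral_enorm]
  exact Measurable.lintegral_prod_right'
    (f := fun p : ℝ × ℝ => ‖φ (p.2 - p.1) - φ p.2‖ₑ) (by fun_prop)

lemma eLpNorm_one_sub_le (hφ : Measurable φ) (hB : ∀ x, |φ x| ≤ B) (hv : Integrable v) (s : ℝ) :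
    eLpNorm (dilatedConv φ v s - fun ξ => (∫ z, v z) * φ ξ) 1 volume ≤
      ∫⁻ z, eLpNorm (fun ξ => φ (ξ - z / s) - φ ξ) 1 volume * ‖v z‖ₑ := by
  have hK : AEStronglyMeasurable
      (Function.uncurry fun ξ z => (φ (ξ - z / s) - φ ξ) * v z) (volume.prod volume) := by
    have : Measurable fun q : ℝ × ℝ => φ (q.1 - q.2 / s) - φ q.1 := by fun_prop
    exact this.aestronglyMeasurable.mul hv.1.comp_snd
  have heq : (dilatedConv φ v s - fun ξ => (∫ z, v z) * φ ξ) =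
      fun ξ => ∫ z, (φ (ξ - z / s) - φ ξ) * v z :=
    funext (sub_integral_mul hφ hB hv s)
  rw [heq]
  refine (eLpNorm_one_integral_le hK).trans_eq (lintegral_congr fun z => ?_)
  simp only [eLpNorm_one_eq_lintegral_enorm, enorm_mul]
  exact lintegral_mul_const' _ _ enorm_ne_top

lemma tendsto_eLpNorm_one_sub (hφ : Measurable φ) (hφ_int : Integrable φ) (hB : ∀ x, |φ x| ≤ B)
    (hv : Integrable v) :
    Tendsto (fun s => eLpNorm (dilatedConv φ v s - fun ξ => (∫ z, v z) * φ ξ) 1 volume)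
      atTop (𝓝 0) := by
  have hφ_memLp : MemLp φ 1 := memLp_one_iff_integrable.2 hφ_int
  have bound_tendsto : Tendsto
      (fun s => ∫⁻ z, eLpNorm (fun ξ => φ (ξ - z / s) - φ ξ) 1 volume * ‖v z‖ₑ)
      atTop (𝓝 (∫⁻ _ : ℝ, 0)) := by
    refine tendsto_lintegral_filter_of_dominated_convergence'
      (fun z => 2 * eLpNorm φ 1 volume * ‖v z‖ₑ) (.of_forall fun s => ?_)
      (.of_forall fun s => .of_forall fun z => ?_) ?_
      (.of_forall fun z => ?_)
    · exact ((measurable_eLpNorm_one_comp_sub_sub hφ).comp (by fun_prop)).aemeasurable.mul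
        hv.1.enorm
    · gcongr
      exact eLpNorm_comp_sub_sub_le le_rfl hφ_memLp.1 _
    · have h_top : 2 * eLpNorm φ 1 volume ≠ ∞ :=
        ENNReal.mul_ne_top ENNReal.ofNat_ne_top hφ_memLp.eLpNorm_ne_top
      rw [lintegral_const_mul' _ _ h_top]
      exact ENNReal.mul_ne_top h_top hv.2.ne
    · have h_shift : Tendsto (fun s : ℝ => z / s) atTop (𝓝 0) :=
        tendsto_const_nhds.div_atTop tendsto_id
      simpa only [Function.comp_def, zero_mul] using ENNReal.Tendsto.mul_const
        ((tendsto_eLpNorm_comp_sub_sub le_rfl ENNReal.one_ne_top hφ_memLp).comp h_shift)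
        (.inr enorm_ne_top)
  rw [lintegral_zero] at bound_tendsto
  exact tendsto_of_tendsto_of_tendsto_of_le_of_le tendsto_const_nhds bound_tendsto
    (fun _ => zero_le) (eLpNorm_one_sub_le hφ hB hv)

lemma tendsto_eLpNorm_sub (hφ : UniformContinuous φ) (hφ_int : Integrable φ)
    (hB : ∀ x, |φ x| ≤ B) (hv : Integrable v) {p : ℝ≥0∞} (hp : 1 ≤ p) :
    Tendsto (fun s => eLpNorm (dilatedConv φ v s - fun ξ => (∫ z, v z) * φ ξ) p volume)
      atTop (𝓝 0) := by
  have endpoints := (tendsto_eLpNorm_one_sub hφ.continuous.measurable hφ_int hB hv).max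
    (tendsto_eLpNorm_top_sub_of_tendstoUniformly volume (tendstoUniformly hφ hB hv))
  rw [max_self] at endpoints
  exact tendsto_of_tendsto_of_tendsto_of_le_of_le tendsto_const_nhds endpoints
    (fun _ => zero_le) fun _ => eLpNorm_le_max_eLpNorm_one_top _ hp

end dilatedConv

section Primitive

variable {E : Type*} [NormedAddCommGroup E] [NormedSpace ℝ E]

lemma integral_Iic_eq_intervalIntegral_add {f : ℝ → E} (hf : Integrable f) (a : ℝ) :
    (fun x => ∫ z in Set.Iic x, f z) = fun x => (∫ z in a..x, f z) + ∫ z in Set.Iic a, f z := by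
  ext x
  rw [← intervalIntegral.integral_Iic_sub_Iic hf.integrableOn hf.integrableOn, sub_add_cancel]

lemma continuous_integral_Iic {f : ℝ → E} (hf : Integrable f) :
    Continuous fun x => ∫ z in Set.Iic x, f z := by
  rw [integral_Iic_eq_intervalIntegral_add hf 0]
  exact (intervalIntegral.continuous_primitive (fun _ _ => hf.intervalIntegrable) 0).add
    continuous_const

lemma hasDerivAt_integral_Iic [CompleteSpace E] {f : ℝ → E} (hf : Integrable f)
    (hf_cont : Continuous f) (x : ℝ) :
    HasDerivAt (fun x => ∫ z in Set.Iic x, f z) (f x) x := by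
  rw [integral_Iic_eq_intervalIntegral_add hf 0]
  exact (hf_cont.integral_hasStrictDerivAt 0 x).hasDerivAt.add_const _

lemma norm_integral_Iic_le {f : ℝ → E} (hf : Integrable f) (x : ℝ) :
    ‖∫ z in Set.Iic x, f z‖ ≤ ∫ z, ‖f z‖ :=
  (norm_integral_le_integral_norm _).trans
    (setIntegral_le_integral hf.norm (.of_forall fun _ => norm_nonneg _))

lemma tendsto_integral_Iic_atTop {f : ℝ → E} (hf : Integrable f) :
    Tendsto (fun x => ∫ z in Set.Iic x, f z) atTop (𝓝 (∫ z, f z)) :=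
  (aecover_Iic tendsto_id).integral_tendsto_of_countably_generated hf

end Primitive

section Substitution

lemma absolutelyContinuousOnInterval_comp {E Y : Type*} [SeminormedAddCommGroup E]
    [PseudoMetricSpace Y] {g : E → Y} (hg : LocallyLipschitz g) {f : ℝ → E} {a b : ℝ}
    (hf : AbsolutelyContinuousOnInterval f a b) :
    AbsolutelyContinuousOnInterval (fun x => g (f x)) a b := by
  obtain ⟨K, hK⟩ :=
    (hg.locallyLipschitzOn (s := f '' Set.uIcc a b)).exists_lipschitzOnWith_of_compact
      (isCompact_uIcc.image_of_continuousOn hf.continuousOn)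
  unfold AbsolutelyContinuousOnInterval at hf ⊢
  have bound_tendsto := hf.const_mul (K : ℝ)
  rw [mul_zero] at bound_tendsto
  refine squeeze_zero' (.of_forall fun I => Finset.sum_nonneg fun _ _ => dist_nonneg) ?_
    bound_tendsto
  filter_upwards [mem_inf_of_right (mem_principal_self _)] with I hI
  rw [Finset.mul_sum]
  exact Finset.sum_le_sum fun i hi => hK.dist_le_mul _
    (Set.mem_image_of_mem f (hI.1 i hi).1) _ (Set.mem_image_of_mem f (hI.1 i hi).2)

variable {f g : ℝ → ℝ}

lemma absolutelyContinuousOnInterval_integral_Iic (hf : Integrable f) (a b : ℝ) :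
    AbsolutelyContinuousOnInterval (fun x => ∫ z in Set.Iic x, f z) a b := by
  rw [integral_Iic_eq_intervalIntegral_add hf a]
  exact (hf.intervalIntegrable.absolutelyContinuousOnInterval_intervalIntegral
    Set.left_mem_uIcc).add (LipschitzWith.const _).lipschitzOnWith.absolutelyContinuousOnInterval

lemma ae_hasDerivAt_integral_Iic (hf : Integrable f) :
    ∀ᵐ x, HasDerivAt (fun x => ∫ z in Set.Iic x, f z) (f x) x := by
  rw [integral_Iic_eq_intervalIntegral_add hf 0]
  filter_upwards [LocallyIntegrable.ae_hasDerivAt_integral hf.locallyIntegrable] with x hx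
  exact (hx 0).add_const _

lemma integrable_mul_comp_integral_Iic (hf : Integrable f) (hg : Continuous g) :
    Integrable fun x => f x * g (∫ z in Set.Iic x, f z) := by
  obtain ⟨C, hC⟩ := (isCompact_closedBall (0 : ℝ) (∫ z, ‖f z‖)).exists_bound_of_continuousOn
    hg.continuousOn
  exact hf.mul_bdd (hg.comp (continuous_integral_Iic hf)).aestronglyMeasurable
    (.of_forall fun x => hC _ (mem_closedBall_zero_iff.2 (norm_integral_Iic_le hf x)))

lemma intervalIntegral_mul_deriv_comp_integral_Iic (hf : Integrable f) (hg : ContDiff ℝ 1 g)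
    (a b : ℝ) :
    ∫ x in a..b, f x * deriv g (∫ z in Set.Iic x, f z) =
      g (∫ z in Set.Iic b, f z) - g (∫ z in Set.Iic a, f z) := by
  rw [← (absolutelyContinuousOnInterval_comp hg.locallyLipschitz
    (absolutelyContinuousOnInterval_integral_Iic hf a b)).integral_deriv_eq_sub]
  refine intervalIntegral.integral_congr_ae ?_
  filter_upwards [ae_hasDerivAt_integral_Iic hf] with x hx _
  have hgx := (hg.differentiable one_ne_zero (∫ z in Set.Iic x, f z)).hasDerivAt
  exact (mul_comm _ _).trans (hgx.comp x hx).deriv.symm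

lemma integral_Iic_mul_deriv_comp_integral_Iic (hf : Integrable f) (hg : ContDiff ℝ 1 g) (b : ℝ) :
    ∫ x in Set.Iic b, f x * deriv g (∫ z in Set.Iic x, f z) =
      g (∫ z in Set.Iic b, f z) - g 0 := by
  have h_int := integrable_mul_comp_integral_Iic hf (hg.continuous_deriv le_rfl)
  have interval_tendsto := intervalIntegral_tendsto_integral_Iic b h_int.integrableOn tendsto_id
  have difference_tendsto := ((hg.continuous.tendsto 0).comp
    (tendsto_integral_Iic_zero (f := f) (μ := volume) tendsto_id)).const_sub
      (g (∫ z in Set.Iic b, f z))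
  simp only [id, intervalIntegral_mul_deriv_comp_integral_Iic hf hg] at interval_tendsto
  exact tendsto_nhds_unique interval_tendsto difference_tendsto

lemma integral_mul_deriv_comp_integral_Iic (hf : Integrable f) (hg : ContDiff ℝ 1 g) :
    ∫ x, f x * deriv g (∫ z in Set.Iic x, f z) = g (∫ z, f z) - g 0 := by
  have h_int := integrable_mul_comp_integral_Iic hf (hg.continuous_deriv le_rfl)
  refine tendsto_nhds_unique (tendsto_integral_Iic_atTop h_int) ?_
  simp only [integral_Iic_mul_deriv_comp_integral_Iic hf hg]
  exact ((hg.continuous.tendsto _).comp (tendsto_integral_Iic_atTop hf)).sub_const _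

end Substitution

section Fubini

variable {f v : ℝ → ℝ} {s : ℝ}

lemma integrable_indicator_mul (hf : Integrable f) (hv : Integrable v) (x s : ℝ) :
    Integrable ({q : ℝ × ℝ | q.2 ≤ x - s * q.1}.indicator fun q => f q.1 * v q.2)
      (volume.prod volume) :=
  (hf.mul_prod hv).indicator (measurableSet_le (by fun_prop) (by fun_prop))

lemma mul_integral_Iic_eq_integral_indicator (f v : ℝ → ℝ) (x s η : ℝ) :
    f η * ∫ z in Set.Iic (x - s * η), v z =
      ∫ z, {q : ℝ × ℝ | q.2 ≤ x - s * q.1}.indicator (fun q => f q.1 * v q.2) (η, z) := by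
  rw [← integral_const_mul, ← integral_indicator measurableSet_Iic]
  rfl

lemma integrable_mul_integral_Iic (hf : Integrable f) (hv : Integrable v) (x s : ℝ) :
    Integrable fun η => f η * ∫ z in Set.Iic (x - s * η), v z := by
  simp only [mul_integral_Iic_eq_integral_indicator]
  exact (integrable_indicator_mul hf hv x s).integral_prod_left

lemma integral_mul_integral_Iic (hf : Integrable f) (hv : Integrable v) (hs : 0 < s) (x : ℝ) :
    ∫ η, f η * ∫ z in Set.Iic (x - s * η), v z =
      dilatedConv (fun ξ => ∫ η in Set.Iic ξ, f η) v s (x / s) := by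
  simp only [mul_integral_Iic_eq_integral_indicator]
  rw [integral_integral_swap (f := fun η z => {q : ℝ × ℝ | q.2 ≤ x - s * q.1}.indicator
    (fun q => f q.1 * v q.2) (η, z)) (integrable_indicator_mul hf hv x s), dilatedConv]
  congr 1 with z
  rw [← integral_mul_const, ← integral_indicator measurableSet_Iic]
  congr 1 with η
  have : z ≤ x - s * η ↔ η ≤ x / s - z / s := by
    rw [← sub_div, le_div_iff₀ hs, le_sub_comm, mul_comm]
  simp only [Set.indicator, Set.mem_ofPred_eq, Set.mem_Iic, this]

end Fubini

section Gaussian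

lemma gauss_eq_gaussianPDFReal : gauss = ProbabilityTheory.gaussianPDFReal 0 2 := by
  ext x
  have h_const : (4 * π) ^ (-(1 : ℝ) / 2) = (√(2 * π * 2))⁻¹ := by
    rw [Real.sqrt_eq_rpow, ← Real.rpow_neg (by positivity)]
    ring_nf
  rw [gauss, ProbabilityTheory.gaussianPDFReal, h_const, sub_zero, NNReal.coe_ofNat]
  norm_num

lemma continuous_gauss : Continuous gauss := by
  unfold gauss
  fun_prop

lemma gauss_nonneg (x : ℝ) : 0 ≤ gauss x :=
  gauss_eq_gaussianPDFReal ▸ ProbabilityTheory.gaussianPDFReal_nonneg 0 2 x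

lemma integrable_gauss : Integrable gauss :=
  gauss_eq_gaussianPDFReal ▸ ProbabilityTheory.integrable_gaussianPDFReal 0 2

lemma integral_gauss : ∫ x, gauss x = 1 :=
  gauss_eq_gaussianPDFReal ▸ ProbabilityTheory.integral_gaussianPDFReal_eq_one 0 two_ne_zero

lemma abs_gauss_le_one (x : ℝ) : |gauss x| ≤ 1 := by
  rw [abs_of_nonneg (gauss_nonneg x)]
  refine mul_le_one₀ (Real.rpow_le_one_of_one_le_of_nonpos ?_ (by norm_num))
    (Real.exp_pos _).le (Real.exp_le_one_iff.2 ?_)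
  · linarith [Real.pi_gt_three]
  · linarith [sq_nonneg x]

lemma tendsto_gauss_cocompact : Tendsto gauss (cocompact ℝ) (𝓝 0) := by
  have h_exp := (tendsto_rpow_abs_mul_exp_neg_mul_sq_cocompact (a := 1 / 4) (by norm_num)
    0).const_mul ((4 * π) ^ (-(1 : ℝ) / 2))
  rw [mul_zero] at h_exp
  refine h_exp.congr fun x => ?_
  rw [gauss, Real.rpow_zero, one_mul]
  ring_nf

lemma uniformContinuous_gauss : UniformContinuous gauss :=
  continuous_gauss.uniformContinuous_of_tendsto_cocompact tendsto_gauss_cocompact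

/-- The primitive of `gauss` vanishing at `-∞`, that is, the distribution function of the centred
Gaussian law of variance `2`. It is the limit profile of `w - 1` up to the factor `exp M - 1`. -/
def gaussPrimitive (x : ℝ) : ℝ := ∫ s in Set.Iic x, gauss s

lemma gaussPrimitive_nonneg (x : ℝ) : 0 ≤ gaussPrimitive x := integral_nonneg gauss_nonneg

lemma gaussPrimitive_le_one (x : ℝ) : gaussPrimitive x ≤ 1 :=
  (setIntegral_le_integral integrable_gauss (.of_forall gauss_nonneg)).trans_eq integral_gauss

lemma abs_gaussPrimitive_le_one (x : ℝ) : |gaussPrimitive x| ≤ 1 := by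
  rw [abs_of_nonneg (gaussPrimitive_nonneg x)]
  exact gaussPrimitive_le_one x

lemma hasDerivAt_gaussPrimitive (x : ℝ) : HasDerivAt gaussPrimitive (gauss x) x :=
  hasDerivAt_integral_Iic integrable_gauss continuous_gauss x

lemma uniformContinuous_gaussPrimitive : UniformContinuous gaussPrimitive := by
  refine (lipschitzWith_of_nnnorm_deriv_le (C := 1)
    (fun x => (hasDerivAt_gaussPrimitive x).differentiableAt) fun x => ?_).uniformContinuous
  rw [(hasDerivAt_gaussPrimitive x).deriv]
  exact abs_gauss_le_one x

end Gaussian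

section HeatKernel

lemma G1_eq_gauss {t : ℝ} (ht : 0 < t) (x : ℝ) : G1 x t = (√t)⁻¹ * gauss (x / √t) := by
  have h_exponent : -x ^ 2 / (4 * t) = -(x / √t) ^ 2 / 4 := by
    rw [div_pow, Real.sq_sqrt ht.le]
    field_simp
  have h_rpow : t ^ (-(1 : ℝ) / 2) = (√t)⁻¹ := by
    rw [Real.sqrt_eq_rpow, ← Real.rpow_neg ht.le, neg_div]
  rw [G1, gauss, Real.mul_rpow (by positivity) ht.le, h_rpow, h_exponent]
  ring

lemma integral_G1_mul {t : ℝ} (ht : 0 < t) (x : ℝ) (f : ℝ → ℝ) :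
    ∫ y, G1 (x - y) t * f y = ∫ η, gauss η * f (x - √t * η) := by
  have hs : 0 < √t := Real.sqrt_pos.2 ht
  calc ∫ y, G1 (x - y) t * f y
      = ∫ r, G1 r t * f (x - r) := by
        rw [← integral_sub_left_eq_self _ volume x]
        simp only [sub_sub_cancel]
    _ = ∫ r, (√t)⁻¹ * (gauss (r / √t) * f (x - √t * (r / √t))) := by
        simp only [G1_eq_gauss ht, mul_div_cancel₀ _ hs.ne', mul_assoc]
    _ = ∫ η, gauss η * f (x - √t * η) := by
        rw [integral_const_mul, Measure.integral_comp_div (fun η => gauss η * f (x - √t * η)),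
          abs_of_pos hs, smul_eq_mul, inv_mul_cancel_left₀ hs.ne']

end HeatKernel

section HopfCole

variable {u₀ : ℝ → ℝ}

/-- The almost everywhere derivative `u₀ w₀` of the Hopf–Cole datum `w₀ = exp (∫_{-∞}^x u₀)`.
Unlike `w₀` it is integrable, so `w` is expressed through convolutions against it. -/
def hopfColeDensity (u₀ : ℝ → ℝ) (y : ℝ) : ℝ := u₀ y * Real.exp (∫ z in Set.Iic y, u₀ z)

lemma integrable_hopfColeDensity (hu₀ : Integrable u₀) : Integrable (hopfColeDensity u₀) :=
  integrable_mul_comp_integral_Iic hu₀ Real.continuous_exp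

lemma integral_Iic_hopfColeDensity (hu₀ : Integrable u₀) (x : ℝ) :
    ∫ y in Set.Iic x, hopfColeDensity u₀ y = Real.exp (∫ z in Set.Iic x, u₀ z) - 1 := by
  simpa only [hopfColeDensity, Real.deriv_exp, Real.exp_zero] using
    integral_Iic_mul_deriv_comp_integral_Iic hu₀ Real.contDiff_exp x

lemma integral_hopfColeDensity (hu₀ : Integrable u₀) :
    ∫ y, hopfColeDensity u₀ y = Real.exp (∫ z, u₀ z) - 1 := by
  simpa only [hopfColeDensity, Real.deriv_exp, Real.exp_zero] using
    integral_mul_deriv_comp_integral_Iic hu₀ Real.contDiff_exp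

lemma integral_G1_mul_exp_eq (hu₀ : Integrable u₀) {t : ℝ} (ht : 0 < t) (x : ℝ) :
    ∫ y, G1 (x - y) t * Real.exp (∫ z in Set.Iic y, u₀ z) =
      dilatedConv gaussPrimitive (hopfColeDensity u₀) √t (x / √t) + 1 := by
  have hv := integrable_hopfColeDensity hu₀
  have exp_eq (y : ℝ) : Real.exp (∫ z in Set.Iic y, u₀ z) =
      (∫ z in Set.Iic y, hopfColeDensity u₀ z) + 1 := by
    rw [integral_Iic_hopfColeDensity hu₀, sub_add_cancel]
  rw [integral_G1_mul ht x fun y => Real.exp (∫ z in Set.Iic y, u₀ z)]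
  simp only [exp_eq, mul_add, mul_one]
  rw [integral_add (integrable_mul_integral_Iic integrable_gauss hv x _) integrable_gauss,
    integral_mul_integral_Iic integrable_gauss hv (Real.sqrt_pos.2 ht), integral_gauss]
  rfl

lemma deriv_integral_G1_mul_exp (hu₀ : Integrable u₀) {t : ℝ} (ht : 0 < t) (x : ℝ) :
    deriv (fun x => ∫ y, G1 (x - y) t * Real.exp (∫ z in Set.Iic y, u₀ z)) x =
      (√t)⁻¹ * dilatedConv gauss (hopfColeDensity u₀) √t (x / √t) := by
  simp only [integral_G1_mul_exp_eq hu₀ ht]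
  have h_conv := dilatedConv.hasDerivAt hasDerivAt_gaussPrimitive abs_gaussPrimitive_le_one
    abs_gauss_le_one (integrable_hopfColeDensity hu₀) √t (x / √t)
  have h_div : HasDerivAt (fun x => x / √t) (√t)⁻¹ x := by
    simpa only [id, one_div] using (hasDerivAt_id x).div_const √t
  exact (((h_conv.comp x h_div).add_const 1).deriv).trans (mul_comm _ _)

/-- The Hopf–Cole solution in the self-similar variables `s = √t`, `ξ = x / √t`, that is
`s u(sξ, s²)`. Its limit as `s → ∞` is `f_M`. -/
def hopfColeProfile (u₀ : ℝ → ℝ) (s ξ : ℝ) : ℝ :=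
  dilatedConv gauss (hopfColeDensity u₀) s ξ /
    (dilatedConv gaussPrimitive (hopfColeDensity u₀) s ξ + 1)

lemma deriv_div_eq_hopfColeProfile (hu₀ : Integrable u₀) {t : ℝ} (ht : 0 < t) (x : ℝ) :
    deriv (fun x => ∫ y, G1 (x - y) t * Real.exp (∫ z in Set.Iic y, u₀ z)) x /
        ∫ y, G1 (x - y) t * Real.exp (∫ z in Set.Iic y, u₀ z) =
      (√t)⁻¹ * hopfColeProfile u₀ √t (x / √t) := by
  rw [deriv_integral_G1_mul_exp hu₀ ht, integral_G1_mul_exp_eq hu₀ ht, hopfColeProfile,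
    mul_div_assoc]

lemma uM_eq_inv_sqrt_mul {t : ℝ} (ht : 0 < t) (M x : ℝ) :
    uM M x t = (√t)⁻¹ * fM M (x / √t) := by
  rw [uM, Real.sqrt_eq_rpow, ← Real.rpow_neg ht.le, neg_div]

lemma min_one_exp_le_mul_gaussPrimitive_add_one (M x : ℝ) :
    min 1 (Real.exp M) ≤ (Real.exp M - 1) * gaussPrimitive x + 1 := by
  calc min 1 (Real.exp M)
      = min 1 (Real.exp M) * (1 - gaussPrimitive x) + min 1 (Real.exp M) * gaussPrimitive x := by
        ring
    _ ≤ 1 * (1 - gaussPrimitive x) + Real.exp M * gaussPrimitive x := by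
        gcongr
        · exact sub_nonneg.2 (gaussPrimitive_le_one x)
        · exact min_le_left _ _
        · exact gaussPrimitive_nonneg x
        · exact min_le_right _ _
    _ = (Real.exp M - 1) * gaussPrimitive x + 1 := by ring

lemma tendsto_eLpNorm_hopfColeProfile_sub_fM (hu₀ : Integrable u₀) {p : ℝ≥0∞} (hp : 1 ≤ p) :
    Tendsto (fun s => eLpNorm (fun ξ => hopfColeProfile u₀ s ξ - fM (∫ x, u₀ x) ξ) p volume)
      atTop (𝓝 0) := by
  have hv := integrable_hopfColeDensity hu₀
  have gauss_memLp : MemLp gauss p := by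
    refine ⟨continuous_gauss.aestronglyMeasurable,
      (eLpNorm_le_max_eLpNorm_one_top gauss hp).trans_lt (max_lt ?_ ?_)⟩
    · exact (memLp_one_iff_integrable.2 integrable_gauss).eLpNorm_lt_top
    · exact (memLp_top_of_bound continuous_gauss.aestronglyMeasurable 1
        (.of_forall abs_gauss_le_one)).eLpNorm_lt_top
  have numerator_tendsto := dilatedConv.tendsto_eLpNorm_sub uniformContinuous_gauss
    integrable_gauss abs_gauss_le_one hv hp
  have denominator_tendsto := (uniformContinuous_id.add_const (1 : ℝ)).comp_tendstoUniformly
    (dilatedConv.tendstoUniformly uniformContinuous_gaussPrimitive abs_gaussPrimitive_le_one hv)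
  rw [integral_hopfColeDensity hu₀] at numerator_tendsto denominator_tendsto
  refine tendsto_eLpNorm_div_sub_div hp (lt_min one_pos (Real.exp_pos _)) (fun s => ?_)
    (fun s => ?_) (gauss_memLp.const_mul _) ?_ (min_one_exp_le_mul_gaussPrimitive_add_one _)
    numerator_tendsto denominator_tendsto
  · exact (dilatedConv.continuous continuous_gauss abs_gauss_le_one hv s).aestronglyMeasurable
  · exact ((dilatedConv.continuous uniformContinuous_gaussPrimitive.continuous
      abs_gaussPrimitive_le_one hv s).add continuous_const).aestronglyMeasurable
  · exact ((continuous_const.mul uniformContinuous_gaussPrimitive.continuous).add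
      continuous_const).aestronglyMeasurable

end HopfCole

/-- Let `u₀ ∈ L¹(ℝ)` with mass `M`, and let
`u = w_x / w` be the Hopf–Cole solution of the Burgers equation `u_t - u_{xx} = (u²)_x`
with initial datum `u₀`, where `w₀(x) = exp(∫_{-∞}^x u₀)` and `w(·,t) = G(·,t) * w₀`.
Then for all `p ∈ [1,∞]`, `t^{(1/2)(1-1/p)} ‖u(·,t) − u_M(·,t)‖_p → 0` as `t → ∞`,
where `u_M` is the self-similar solution of mass `M`. -/
theorem stmt3 (u₀ : ℝ → ℝ) (hu₀ : Integrable u₀) (M : ℝ) (hM : M = ∫ x, u₀ x)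
    (w₀ : ℝ → ℝ) (hw₀ : w₀ = fun x => Real.exp (∫ z in Set.Iic x, u₀ z))
    (w : ℝ → ℝ → ℝ) (hw : w = fun x t => ∫ y, G1 (x - y) t * w₀ y)
    (u : ℝ → ℝ → ℝ) (hu : u = fun x t => deriv (fun x' => w x' t) x / w x t) :
    ∀ p : ℝ≥0∞, 1 ≤ p →
      Tendsto
        (fun t : ℝ =>
          ENNReal.ofReal (t ^ ((1 / 2 : ℝ) * (1 - 1 / p.toReal))) *
            eLpNorm (fun x => u x t - uM M x t) p volume)
        atTop (𝓝 0) := by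
  intro p hp
  subst hM hw₀ hw hu
  refine ((tendsto_eLpNorm_hopfColeProfile_sub_fM hu₀ hp).comp tendsto_sqrt_atTop).congr' ?_
  filter_upwards [eventually_gt_atTop 0] with t ht
  rw [Function.comp_apply, ← rpow_mul_eLpNorm_inv_sqrt_mul_comp_div_sqrt _ ht]
  congr! 3 with x
  rw [deriv_div_eq_hopfColeProfile hu₀ ht, uM_eq_inv_sqrt_mul ht, mul_sub]
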